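/- Let n ≥ 1, m > 0 and ε_m = min(1/(32(1+m)), 1/(32·m·(1+m))). Let H : ℝ^{2n} → M_{2n}(ℝ) be differentiable and x, p ∈ ℝ^{2n} with ‖x‖ ≤ m, ‖p‖ ≤ m, satisfying ‖H(x)‖ + (Σ_{i=1}^{2n} ‖(∂H_{i,j}/∂x_k(x))_{j,k}‖²)^{1/2} ≤ ε_m, and let A_H(x) be the matrix with entries Σ_i 2(x_i − p_i)·∂H_{i,j}/∂x_k(x). Let D_w be a symmetric 2n×2n real matrix and A_w a 2n×2n real matrix, and suppose λ₀ ≥ 0 is such that Q(J_st + H(x), D_w, A_w, X) ≥ λ₀‖X‖² for all X. Then for every δ with 0 ≤ δ ≤ (2/9)·λ₀ and every X ∈ ℝ^{2n}: Q(J_st + H(x), D_w − 2δ·I_{2n}, A_w − δ·A_H(x), X) ≥ (λ₀ − (9/2)δ)·‖X‖² ≥ 0. (This says that if w is J-plurisubharmonic with Levi form bounded below by λ₀, then w − δ‖·−p‖² is still plurisubharmonic, with Levi form bounded below by λ₀ − (9/2)δ.) -/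

import Mathlib

open Matrix

/-- The Euclidean norm of a real vector. -/
noncomputable def evnorm {m : Type*} [Fintype m] (x : m → ℝ) : ℝ :=
  Real.sqrt (∑ i, x i ^ 2)

/-- The operator norm of a real matrix with respect to the Euclidean norm. -/
noncomputable def opnorm {m : Type*} [Fintype m] [DecidableEq m]
    (M : Matrix m m ℝ) : ℝ :=
  ‖Matrix.toEuclideanCLM (𝕜 := ℝ) M‖

/-- The coordinate expression of the Levi form:
`Q(J,D,A,X) = XᵀDX + (JX)ᵀD(JX) + Xᵀ(A − Aᵀ)(JX)`. -/
noncomputable def LeviQ {m : Type*} [Fintype m] (J D A : Matrix m m ℝ) (X : m → ℝ) : ℝ :=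
  X ⬝ᵥ D.mulVec X + (J.mulVec X) ⬝ᵥ D.mulVec (J.mulVec X)
    + X ⬝ᵥ ((A - Aᵀ).mulVec (J.mulVec X))

/-- The standard complex structure `J_st = [[0, −Iₙ],[Iₙ, 0]]` on `ℝ^{2n} = ℝⁿ ⊕ ℝⁿ`. -/
def Jstd (n : ℕ) : Matrix (Fin n ⊕ Fin n) (Fin n ⊕ Fin n) ℝ :=
  Matrix.fromBlocks 0 (-1) 1 0

theorem evnorm_eq_norm {ι : Type*} [Fintype ι] (v : ι → ℝ) : evnorm v = ‖WithLp.toLp 2 v‖ := by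
  simp [evnorm, EuclideanSpace.norm_eq]

theorem evnorm_nonneg' {ι : Type*} [Fintype ι] (v : ι → ℝ) : 0 ≤ evnorm v := Real.sqrt_nonneg _

theorem evnorm_sq' {ι : Type*} [Fintype ι] (v : ι → ℝ) : evnorm v ^ 2 = v ⬝ᵥ v := by
  rw [evnorm, Real.sq_sqrt (Finset.sum_nonneg fun i _ => sq_nonneg _)]
  simp [dotProduct, sq]

theorem evnorm_add_le' {ι : Type*} [Fintype ι] (v w : ι → ℝ) :
    evnorm (v + w) ≤ evnorm v + evnorm w := by
  simp only [evnorm_eq_norm, WithLp.toLp_add]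
  exact norm_add_le _ _

theorem evnorm_sub_le' {ι : Type*} [Fintype ι] (v w : ι → ℝ) :
    evnorm (v - w) ≤ evnorm v + evnorm w := by
  simp only [evnorm_eq_norm, WithLp.toLp_sub]
  exact norm_sub_le _ _

theorem opnorm_nonneg' {ι : Type*} [Fintype ι] [DecidableEq ι] (M : Matrix ι ι ℝ) :
    0 ≤ opnorm M := norm_nonneg _

theorem evnorm_mulVec_le {ι : Type*} [Fintype ι] [DecidableEq ι] (M : Matrix ι ι ℝ) (v : ι → ℝ) :
    evnorm (M *ᵥ v) ≤ opnorm M * evnorm v := by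
  simp only [evnorm_eq_norm, opnorm]
  have := (Matrix.toEuclideanCLM (𝕜 := ℝ) M).le_opNorm (WithLp.toLp 2 v)
  simpa using this

theorem abs_dot_le {ι : Type*} [Fintype ι] (v w : ι → ℝ) :
    |v ⬝ᵥ w| ≤ evnorm v * evnorm w := by
  rw [evnorm, evnorm, ← Real.sqrt_mul (Finset.sum_nonneg fun i _ => sq_nonneg _)]
  apply Real.abs_le_sqrt
  exact Finset.sum_mul_sq_le_sq_mul_sq _ _ _

theorem evnorm_Jstd (n : ℕ) (X : (Fin n ⊕ Fin n) → ℝ) : evnorm (Jstd n *ᵥ X) = evnorm X := by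
  unfold evnorm Jstd
  congr 1
  rw [Matrix.fromBlocks_mulVec]
  simp [Fintype.sum_sum_type, Matrix.neg_mulVec, add_comm]

theorem abs_comb_le {ι : Type*} [Fintype ι] [DecidableEq ι] (c : ι → ℝ)
    (B : ι → Matrix ι ι ℝ) (v w : ι → ℝ) :
    |v ⬝ᵥ ((Matrix.of fun j k => ∑ i, 2 * c i * B i j k) *ᵥ w)| ≤
      2 * evnorm c * Real.sqrt (∑ i, opnorm (B i) ^ 2) * evnorm v * evnorm w := by
  have e : v ⬝ᵥ ((Matrix.of fun j k => ∑ i, 2 * c i * B i j k) *ᵥ w)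
      = 2 * (c ⬝ᵥ fun i => v ⬝ᵥ (B i *ᵥ w)) := by
    simp only [dotProduct, mulVec, Matrix.of_apply, Finset.mul_sum, Finset.sum_mul]
    rw [Finset.sum_comm_cycle]
    refine Finset.sum_congr rfl fun i _ => ?_
    refine Finset.sum_congr rfl fun j _ => Finset.sum_congr rfl fun k _ => ?_
    ring
  have h2 : evnorm (fun i => v ⬝ᵥ (B i *ᵥ w)) ≤
      Real.sqrt (∑ i, opnorm (B i) ^ 2) * (evnorm v * evnorm w) := by
    have hvw : 0 ≤ evnorm v * evnorm w := mul_nonneg (evnorm_nonneg' _) (evnorm_nonneg' _)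
    rw [← Real.sqrt_sq hvw, ← Real.sqrt_mul (Finset.sum_nonneg fun i _ => sq_nonneg _), evnorm]
    apply Real.sqrt_le_sqrt
    rw [Finset.sum_mul]
    refine Finset.sum_le_sum fun i _ => ?_
    rw [← mul_pow, ← sq_abs]
    apply pow_le_pow_left₀ (abs_nonneg _)
    calc _ ≤ evnorm v * evnorm (B i *ᵥ w) := abs_dot_le _ _
      _ ≤ evnorm v * (opnorm (B i) * evnorm w) :=
        mul_le_mul_of_nonneg_left (evnorm_mulVec_le _ _) (evnorm_nonneg' _)
      _ = _ := by ring
  rw [e, abs_mul, abs_two]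
  have h1 := abs_dot_le c (fun i => v ⬝ᵥ (B i *ᵥ w))
  have h3 := mul_le_mul_of_nonneg_left h2 (evnorm_nonneg' c)
  linarith

theorem scalar_key (s t c b u v : ℝ) (f1 : t ^ 2 ≤ (33 / 32 * s) ^ 2)
    (f2 : s * t ≤ s * (33 / 32 * s)) (f3 : c * b * (s * t) ≤ 1 / 16 * (s * t))
    (g1 : u ≤ 2 * c * b * s * t) (g2 : -(2 * c * b * t * s) ≤ v) :
    2 * s ^ 2 + 2 * t ^ 2 + u - v ≤ 9 / 2 * s ^ 2 := by
  nlinarith [sq_nonneg s]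

theorem scalar_key2 (m e : ℝ) (he : 0 ≤ e) (h : e * (32 * m * (1 + m)) ≤ 1) :
    m * e ≤ 1 / 32 := by
  have : 0 ≤ e * (m * m) := mul_nonneg he (mul_self_nonneg m)
  linarith

theorem LeviQ_sub {ι : Type*} [Fintype ι] [DecidableEq ι] (J D A A' : Matrix ι ι ℝ) (δ : ℝ)
    (X : ι → ℝ) :
    LeviQ J (D - (2 * δ) • (1 : Matrix ι ι ℝ)) (A - δ • A') X =
      LeviQ J D A X - δ * (2 * evnorm X ^ 2 + 2 * evnorm (J *ᵥ X) ^ 2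
        + X ⬝ᵥ (A' *ᵥ (J *ᵥ X)) - (J *ᵥ X) ⬝ᵥ (A' *ᵥ X)) := by
  have t : X ⬝ᵥ (A'ᵀ *ᵥ (J *ᵥ X)) = (J *ᵥ X) ⬝ᵥ (A' *ᵥ X) := by
    rw [Matrix.mulVec_transpose, dotProduct_comm, ← Matrix.dotProduct_mulVec]
  rw [← t, evnorm_sq', evnorm_sq']
  simp only [LeviQ, Matrix.sub_mulVec, Matrix.smul_mulVec, Matrix.one_mulVec, dotProduct_sub,
    dotProduct_smul, Matrix.transpose_sub, Matrix.transpose_smul, smul_eq_mul]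
  ring

/-- In the setting of the `ε_m`-bound on `H` at `x` (with
`‖x‖, ‖p‖ ≤ m`), if `w` has Levi data `(D_w, A_w)` with
`Q(J_st + H(x), D_w, A_w, X) ≥ λ₀‖X‖²` for all `X` and `0 ≤ δ ≤ (2/9)λ₀`, then the Levi
data `(D_w − 2δI, A_w − δA_H(x))` of `w − δ‖·−p‖²` satisfies
`Q(J_st + H(x), D_w − 2δI, A_w − δA_H(x), X) ≥ (λ₀ − (9/2)δ)‖X‖² ≥ 0`. -/
theorem stmt13 {n : ℕ} (hn : 1 ≤ n) (m : ℝ) (hm : 0 < m)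
    (H : ((Fin n ⊕ Fin n) → ℝ) → Matrix (Fin n ⊕ Fin n) (Fin n ⊕ Fin n) ℝ)
    (x p : (Fin n ⊕ Fin n) → ℝ)
    (hdiff : ∀ i j, DifferentiableAt ℝ (fun y => H y i j) x)
    (hx : evnorm x ≤ m) (hp : evnorm p ≤ m)
    (hbound : opnorm (H x)
        + Real.sqrt (∑ i, opnorm (Matrix.of fun j k =>
            fderiv ℝ (fun y => H y i j) x (Pi.single k 1)) ^ 2)
      ≤ min (1 / (32 * (1 + m))) (1 / (32 * m * (1 + m))))
    (Dw Aw : Matrix (Fin n ⊕ Fin n) (Fin n ⊕ Fin n) ℝ) (hDw : Dw.IsSymm)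
    (lam₀ : ℝ) (hlam₀ : 0 ≤ lam₀)
    (hQ : ∀ X : (Fin n ⊕ Fin n) → ℝ,
      lam₀ * evnorm X ^ 2 ≤ LeviQ (Jstd n + H x) Dw Aw X)
    (δ : ℝ) (hδ0 : 0 ≤ δ) (hδ : δ ≤ (2 / 9) * lam₀) (X : (Fin n ⊕ Fin n) → ℝ) :
    (lam₀ - (9 / 2) * δ) * evnorm X ^ 2 ≤
        LeviQ (Jstd n + H x)
          (Dw - (2 * δ) • (1 : Matrix (Fin n ⊕ Fin n) (Fin n ⊕ Fin n) ℝ))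
          (Aw - δ • (Matrix.of fun j k => ∑ i, 2 * (x i - p i)
            * fderiv ℝ (fun y => H y i j) x (Pi.single k 1))) X ∧
      0 ≤ (lam₀ - (9 / 2) * δ) * evnorm X ^ 2 := by
  refine ⟨?_, mul_nonneg (by linarith) (sq_nonneg _)⟩
  rw [LeviQ_sub]
  have hq := hQ X
  set B : (Fin n ⊕ Fin n) → Matrix (Fin n ⊕ Fin n) (Fin n ⊕ Fin n) ℝ := fun i =>
    Matrix.of fun j k => fderiv ℝ (fun y => H y i j) x (Pi.single k 1) with hB
  set Y := (Jstd n + H x) *ᵥ X with hY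
  have a1 := abs_comb_le (x - p) B X Y
  have a2 := abs_comb_le (x - p) B Y X
  set A : Matrix (Fin n ⊕ Fin n) (Fin n ⊕ Fin n) ℝ := Matrix.of fun j k => ∑ i, 2 * (x i - p i)
            * fderiv ℝ (fun y => H y i j) x (Pi.single k 1) with hA
  change |X ⬝ᵥ (A *ᵥ Y)| ≤ _ at a1
  change |Y ⬝ᵥ (A *ᵥ X)| ≤ _ at a2
  change opnorm (H x) + Real.sqrt (∑ i, opnorm (B i) ^ 2) ≤ _ at hbound
  have hb0 : 0 ≤ Real.sqrt (∑ i, opnorm (B i) ^ 2) := Real.sqrt_nonneg _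
  set b := Real.sqrt (∑ i, opnorm (B i) ^ 2)
  have hh0 := opnorm_nonneg' (H x)
  have hYn : evnorm Y ≤ (1 + opnorm (H x)) * evnorm X := by
    rw [hY, Matrix.add_mulVec]
    have := evnorm_add_le' (Jstd n *ᵥ X) (H x *ᵥ X)
    have := evnorm_mulVec_le (H x) X
    rw [evnorm_Jstd] at *
    linarith
  set h := opnorm (H x)
  have hc : evnorm (x - p) ≤ 2 * m := by linarith [evnorm_sub_le' x p]
  have hc0 := evnorm_nonneg' (x - p)
  set c := evnorm (x - p)
  have e1 : h + b ≤ 1 / 32 := by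
    refine (hbound.trans (min_le_left _ _)).trans ?_
    apply one_div_le_one_div_of_le <;> linarith
  have e2 : m * (h + b) ≤ 1 / 32 := by
    have h1 := hbound.trans (min_le_right _ _)
    rw [le_div_iff₀ (by positivity)] at h1
    exact scalar_key2 m (h + b) (add_nonneg hh0 hb0) h1
  have e3 : c * b ≤ 1 / 16 := by
    have := mul_le_mul_of_nonneg_right hc hb0
    have := mul_nonneg hm.le hh0
    linarith
  have hX0 := evnorm_nonneg' X
  have hY0 := evnorm_nonneg' Y
  have hY1 : evnorm Y ≤ 33 / 32 * evnorm X :=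
    hYn.trans (mul_le_mul_of_nonneg_right (by linarith) hX0)
  set s := evnorm X
  set t := evnorm Y
  have f1 : t ^ 2 ≤ (33 / 32 * s) ^ 2 := pow_le_pow_left₀ hY0 hY1 2
  have f2 : s * t ≤ s * (33 / 32 * s) := mul_le_mul_of_nonneg_left hY1 hX0
  have f3 : c * b * (s * t) ≤ 1 / 16 * (s * t) :=
    mul_le_mul_of_nonneg_right e3 (mul_nonneg hX0 hY0)
  have key : 2 * s ^ 2 + 2 * t ^ 2 + X ⬝ᵥ (A *ᵥ Y) - Y ⬝ᵥ (A *ᵥ X) ≤ 9 / 2 * s ^ 2 := by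
    have g1 := (abs_le.mp a1).2
    have g2 := (abs_le.mp a2).1
    exact scalar_key s t c b _ _ f1 f2 f3 g1 g2
  have := mul_le_mul_of_nonneg_left key hδ0
  linarith
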